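/- arXiv:1709.00555 — 4 statements merged into one kernel-verified Lean document; each statement's English description precedes it below -/
import Mathlib

section
/- Let R be a commutative ring, A = R[X] the polynomial ring in one variable, I an ideal of A, w ∈ I, p a prime and m ≥ 0. Then for all r, l ∈ ℕ and every f ∈ I^r one has w^l · (⌊l/p^m⌋)! · (hasseDeriv l f) ∈ I^r. -/
open Polynomial

/-!
By the Leibniz formula, the `l`-th component `D l` of a higher derivation lowers the `I`-adic order
by at most `l`: in a term `D i a * D j b` with `a ∈ I`, the order contributed by `a` is lost only if
`i` is positive. Multiplying by `w ^ l ∈ I ^ l` restores the lost order.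
-/

/-- A higher (Hasse–Schmidt) derivation of infinite length on `A`: a sequence of additive maps
starting with the identity and satisfying the divided-power Leibniz formula. This is the structure
shared by the divided partial derivatives in any coordinate; additive maps are used so that no base
ring has to be fixed. -/
structure IsHigherDerivation {A : Type*} [Semiring A] (D : ℕ → A →+ A) : Prop where
  zero_eq_id : D 0 = AddMonoidHom.id A
  leibniz (l : ℕ) (a b : A) :
    D l (a * b) = ∑ ij ∈ Finset.HasAntidiagonal.antidiagonal l, D ij.1 a * D ij.2 b

theorem isHigherDerivation_hasseDeriv (R : Type*) [Semiring R] :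
    IsHigherDerivation fun l ↦ (hasseDeriv l : R[X] →ₗ[R] R[X]).toAddMonoidHom where
  zero_eq_id := AddMonoidHom.ext hasseDeriv_zero'
  leibniz l f g := hasseDeriv_mul l f g

namespace IsHigherDerivation

variable {A : Type*} [CommSemiring A] {D : ℕ → A →+ A} {I : Ideal A}

theorem apply_mem_pow_one_sub (hD : IsHigherDerivation D) (i : ℕ) {a : A} (ha : a ∈ I) :
    D i a ∈ I ^ (1 - i) := by
  cases i with
  | zero => simpa [hD.zero_eq_id] using ha
  | succ i => simp

theorem apply_mem_pow_sub (hD : IsHigherDerivation D) {r : ℕ} (l : ℕ) {f : A} (hf : f ∈ I ^ r) :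
    D l f ∈ I ^ (r - l) := by
  induction r generalizing l f with
  | zero => simp
  | succ r ih =>
    rw [pow_succ'] at hf
    induction hf using Submodule.mul_induction_on' with
    | mem_mul_mem a ha b hb =>
      rw [hD.leibniz]
      refine sum_mem fun ⟨i, j⟩ hij ↦ ?_
      rw [Finset.HasAntidiagonal.mem_antidiagonal] at hij
      have hprod : D i a * D j b ∈ I ^ ((1 - i) + (r - j)) :=
        pow_add I (1 - i) (r - j) ▸
          Ideal.mul_mem_mul (hD.apply_mem_pow_one_sub i ha) (ih j hb)
      exact Ideal.pow_le_pow_right (by lia) hprod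
    | add x _ y _ hx hy =>
      rw [map_add]
      exact add_mem hx hy

end IsHigherDerivation

theorem statement5_general {A : Type*} [CommSemiring A] {D : ℕ → A →+ A}
    (hD : IsHigherDerivation D) (I : Ideal A) (w : A) (hw : w ∈ I)
    (r l : ℕ) (f : A) (hf : f ∈ I ^ r) :
    w ^ l * D l f ∈ I ^ r := by
  have hprod : w ^ l * D l f ∈ I ^ (l + (r - l)) :=
    pow_add I l (r - l) ▸
      Ideal.mul_mem_mul (Ideal.pow_mem_pow hw l) (hD.apply_mem_pow_sub l hf)
  exact Ideal.pow_le_pow_right (by lia) hprod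

/-- Assertion from the proof of Lemma 2.1.4(ii), for one coordinate on a polynomial ring:
if `I` is an ideal of `A = R[X]` and `w ∈ I`, then for all `r, l ∈ ℕ` and `f ∈ I^r` one has
`w^l · ⌊l/p^m⌋! · ∂^{[l]}(f) ∈ I^r`, where `∂^{[l]}` is the `l`-th Hasse derivative, so that
`⌊l/p^m⌋!·∂^{[l]} = ∂^{⟨l⟩}` is the level-`m` divided differential operator. -/
theorem statement5 {R : Type*} [CommRing R] (I : Ideal (Polynomial R))
    (w : Polynomial R) (hw : w ∈ I) (p : ℕ) (hp : p.Prime) (m : ℕ)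
    (r l : ℕ) (f : Polynomial R) (hf : f ∈ I ^ r) :
    w ^ l * ((Nat.factorial (l / p ^ m) : Polynomial R) * Polynomial.hasseDeriv l f)
      ∈ I ^ r := by
  rw [mul_left_comm]
  exact Ideal.mul_mem_left _ _
    (statement5_general (isHigherDerivation_hasseDeriv R) I w hw r l f hf)
end

section
/- Let I be an ideal of A, w ∈ I, δ ≥ 1 an integer, and let s ∈ I^δ be invertible in K. Then for every ν ∈ ℕ one has s^{ν+1} · w^ν · d^ν(s^{−1}) ∈ I^{νδ}; equivalently, w^ν·d^ν(s^{−1}) ∈ s^{−(ν+1)}·I^{νδ}. -/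
/-!
Clearing denominators in `d^n(s⁻¹)` gives a numerator `N n = s^(n+1) * d^n(s⁻¹)` which is a
differential polynomial in `s`: differentiating this equation yields the recursion
`N (n+1) = s * d (N n) - (n+1) * d s * N n`. A derivation lowers `I`-adic order by at most one,
so for `s ∈ I^(k+1)` each step of the recursion raises the order by at least `k`, and
`N n ∈ I^(n*k)`. The factor `w^n ∈ I^n` makes up the difference to `I^(n*(k+1))`.
-/

/-- An additive map satisfying the Leibniz rule, bundled as a `ℤ`-linear derivation. -/
def derivationOfLeibniz {K : Type*} [CommRing K] (d : K → K)
    (hadd : ∀ a b, d (a + b) = d a + d b) (hleib : ∀ a b, d (a * b) = a * d b + b * d a) :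
    Derivation ℤ K K :=
  .mk' (AddMonoidHom.mk' d hadd).toIntLinearMap hleib

section Order

variable {R A M : Type*} [CommSemiring R] [CommSemiring A] [Algebra R A]
  [AddCommMonoid M] [Module A M] [Module R M]

theorem derivation_mem_pow_smul_top (D : Derivation R A M) (I : Ideal A) (n : ℕ) {x : A}
    (hx : x ∈ I ^ (n + 1)) : D x ∈ I ^ n • (⊤ : Submodule A M) := by
  induction n generalizing x with
  | zero => simp
  | succ n ih =>
    rw [pow_succ] at hx
    induction hx using Submodule.mul_induction_on' with
    | mem_mul_mem a ha b hb =>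
      rw [D.leibniz]
      refine add_mem (Submodule.smul_mem_smul ha Submodule.mem_top) ?_
      rw [pow_succ', mul_smul]
      exact Submodule.smul_mem_smul hb (ih ha)
    | add a _ b _ ha hb =>
      rw [map_add]
      exact add_mem ha hb

theorem derivation_mem_pow_sub_one (D : Derivation R A A) {I : Ideal A} {n : ℕ} {x : A}
    (hx : x ∈ I ^ n) : D x ∈ I ^ (n - 1) := by
  cases n with
  | zero => simp
  | succ n => simpa using derivation_mem_pow_smul_top D I n hx

end Order

section InvNumerator

variable {R A : Type*} [CommSemiring R] [CommRing A] [Algebra R A]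

/-- The numerator `s ^ (n + 1) * D^[n] s⁻¹` of the `n`-th derivative of `s⁻¹`. It is given by the
recursion that the quotient rule dictates, so that it makes sense for non-invertible `s`. -/
def invNumerator (D : Derivation R A A) (s : A) : ℕ → A
  | 0 => 1
  | n + 1 => s * D (invNumerator D s n) - (n + 1) * D s * invNumerator D s n

theorem map_invNumerator {S B : Type*} [CommSemiring S] [CommRing B] [Algebra S B]
    (f : A →+* B) {D : Derivation R A A} {E : Derivation S B B}
    (hf : ∀ a, f (D a) = E (f a)) (s : A) (n : ℕ) :
    f (invNumerator D s n) = invNumerator E (f s) n := by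
  induction n with
  | zero => simp [invNumerator]
  | succ n ih => simp [invNumerator, hf, ih]

theorem pow_mul_iterate_derivation_eq_invNumerator (D : Derivation R A A) {s u : A}
    (hu : s * u = 1) (n : ℕ) : s ^ (n + 1) * D^[n] u = invNumerator D s n := by
  induction n with
  | zero => simpa [invNumerator] using hu
  | succ n ih =>
    rw [Function.iterate_succ_apply', invNumerator, ← ih, D.leibniz, D.leibniz_pow]
    simp only [smul_eq_mul, nsmul_eq_mul, Nat.add_sub_cancel, Nat.cast_add, Nat.cast_one]
    ring

theorem invNumerator_mem_pow (D : Derivation R A A) {I : Ideal A} {k : ℕ} {s : A}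
    (hs : s ∈ I ^ (k + 1)) (n : ℕ) : invNumerator D s n ∈ I ^ (n * k) := by
  induction n with
  | zero => simp
  | succ n ih =>
    have hfirst : s * D (invNumerator D s n) ∈ I ^ ((n + 1) * k) := by
      have hle : (n + 1) * k ≤ k + 1 + (n * k - 1) := by rw [add_one_mul]; omega
      apply Ideal.pow_le_pow_right hle
      rw [pow_add]
      exact Ideal.mul_mem_mul hs (derivation_mem_pow_sub_one D ih)
    have hsecond : D s * invNumerator D s n ∈ I ^ ((n + 1) * k) := by
      rw [add_one_mul, add_comm, pow_add]
      exact Ideal.mul_mem_mul (derivation_mem_pow_sub_one D hs) ih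
    rw [invNumerator, mul_assoc]
    exact sub_mem hfirst (Ideal.mul_mem_left _ _ hsecond)

theorem pow_mul_invNumerator_mem_pow (D : Derivation R A A) {I : Ideal A} {k : ℕ} {w s : A}
    (hw : w ∈ I) (hs : s ∈ I ^ (k + 1)) (n : ℕ) :
    w ^ n * invNumerator D s n ∈ I ^ (n * (k + 1)) := by
  rw [mul_add_one, add_comm, pow_add]
  exact Ideal.mul_mem_mul (Ideal.pow_mem_pow hw n) (invNumerator_mem_pow D hs n)

end InvNumerator

/-- Level-zero case, for a single derivation, of the quantitative claim in the proof of
Lemma 2.1.4(ii): let `A` be a subring of a commutative ring `K`, `d : K → K` a derivation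
with `d(A) ⊆ A`, `I` an ideal of `A`, `w ∈ I`, `δ ≥ 1`, and `s ∈ I^δ` invertible in `K`
with inverse `u`. Then for every `ν` one has `s^{ν+1} · w^ν · d^ν(u) ∈ I^{νδ}`. -/
theorem statement8 {K : Type*} [CommRing K] (A : Subring K) (d : K → K)
    (hadd : ∀ a b : K, d (a + b) = d a + d b)
    (hleib : ∀ a b : K, d (a * b) = a * d b + b * d a)
    (hdA : ∀ a ∈ A, d a ∈ A)
    (I : Ideal A) (w : A) (hw : w ∈ I)
    (δ : ℕ) (hδ : 1 ≤ δ) (s : A) (hs : s ∈ I ^ δ)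
    (u : K) (hu : (s : K) * u = 1) (ν : ℕ) :
    ∃ a ∈ I ^ (ν * δ), (s : K) ^ (ν + 1) * (w : K) ^ ν * (d^[ν] u) = (a : K) := by
  obtain ⟨k, rfl⟩ := Nat.exists_eq_add_of_le' hδ
  let DK : Derivation ℤ K K := derivationOfLeibniz d hadd hleib
  let DA : Derivation ℤ A A := derivationOfLeibniz (fun a ↦ ⟨d a, hdA a a.2⟩)
    (fun a b ↦ Subtype.ext (hadd a b)) (fun a b ↦ Subtype.ext (hleib a b))
  have hnumerator : (s : K) ^ (ν + 1) * d^[ν] u = (invNumerator DA s ν : A) :=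
    (pow_mul_iterate_derivation_eq_invNumerator DK hu ν).trans
      (map_invNumerator A.subtype (D := DA) (E := DK) (fun _ ↦ rfl) s ν).symm
  refine ⟨w ^ ν * invNumerator DA s ν, pow_mul_invNumerator_mem_pow DA hw hs ν, ?_⟩
  rw [mul_right_comm, hnumerator, mul_comm, Subring.coe_mul, Subring.coe_pow]
end

section
/- For every integer i ≥ 1, the map B/ϖ^i·B → E/ϖ^i·E induced by the inclusion B ⊆ E is bijective; equivalently, E = B + ϖ^i·E and B ∩ ϖ^i·E = ϖ^i·B. -/
open Pointwise

section

variable {R M : Type*} [CommSemiring R] [AddCommMonoid M] [Module R M]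

theorem sup_eq_sup_smul_sup_of_le {r : R} {B C : Submodule R M} (hC : C ≤ B ⊔ r • C) :
    C ⊔ B = B ⊔ r • (C ⊔ B) := by
  apply le_antisymm
  · have hmono : r • C ≤ r • (C ⊔ B) := smul_mono_right r le_sup_left
    exact sup_le (hC.trans (sup_le_sup_left hmono B)) le_sup_left
  · exact sup_le le_sup_right (Submodule.smul_le_self_of_tower r (C ⊔ B))

theorem inf_smul_eq_smul_of_mem_of_smul_mem {r : R} {B E : Submodule R M} (hBE : B ≤ E)
    (hB : ∀ e ∈ E, r • e ∈ B → e ∈ B) : B ⊓ r • E = r • B := by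
  apply le_antisymm
  · rintro x ⟨hxB, hxE⟩
    obtain ⟨e, he, rfl⟩ := (Submodule.mem_smul_pointwise_iff_exists x r E).mp hxE
    exact Submodule.smul_mem_pointwise_smul e r B (hB e he hxB)
  · exact le_inf (Submodule.smul_le_self_of_tower r B) (smul_mono_right r hBE)

end

theorem mem_of_smul_mem_of_mem_sup {R M : Type*} [Ring R] [AddCommGroup M] [Module R M]
    {r : R} {B C : Submodule R M} (hC : ∀ q ∈ C, r • q ∈ B → q ∈ B) {e : M}
    (he : e ∈ C ⊔ B) (hre : r • e ∈ B) : e ∈ B := by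
  obtain ⟨q, hq, b, hb, rfl⟩ := Submodule.mem_sup.mp he
  have hrq : r • q ∈ B := by
    rwa [smul_add, B.add_mem_iff_left (B.smul_mem r hb)] at hre
  exact B.add_mem (hC q hq hrq) hb

/-- Abstract form of the auxiliary results in Propositions 2.2.7 and 2.2.11 of the paper:
let `𝔬` be a commutative ring, `ϖ ∈ 𝔬`, `V` an `𝔬`-module, and `A ⊆ B`, `A ⊆ Â`
submodules of `V`; set `E = Â + B`. Assume (a) `Â ⊆ A + ϖ^i·Â` for all `i ≥ 1`, and
(b) for `Q ∈ Â` and `i ≥ 1`, `ϖ^i·Q ∈ B` implies `Q ∈ A`. Then for every `i ≥ 1`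
the natural map `B/ϖ^i·B → E/ϖ^i·E` is bijective; equivalently, `E = B + ϖ^i·E` and
`B ∩ ϖ^i·E = ϖ^i·B`. -/
theorem statement11 {𝔬 V : Type*} [CommRing 𝔬] [AddCommGroup V] [Module 𝔬 V]
    (ϖ : 𝔬) (A B Ahat : Submodule 𝔬 V) (hAB : A ≤ B) (hAAhat : A ≤ Ahat)
    (hdense : ∀ i : ℕ, 1 ≤ i → Ahat ≤ A ⊔ (ϖ ^ i • Ahat))
    (hsat : ∀ Q ∈ Ahat, ∀ i : ℕ, 1 ≤ i → ϖ ^ i • Q ∈ B → Q ∈ A)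
    (i : ℕ) (hi : 1 ≤ i) :
    Ahat ⊔ B = B ⊔ (ϖ ^ i • (Ahat ⊔ B)) ∧
    B ⊓ (ϖ ^ i • (Ahat ⊔ B)) = ϖ ^ i • B := by
  have hdenseB : Ahat ≤ B ⊔ ϖ ^ i • Ahat := (hdense i hi).trans (sup_le_sup_right hAB _)
  have hsatB : ∀ Q ∈ Ahat, ϖ ^ i • Q ∈ B → Q ∈ B := fun Q hQ hϖQ ↦ hAB (hsat Q hQ i hi hϖQ)
  exact ⟨sup_eq_sup_smul_sup_of_le hdenseB,
    inf_smul_eq_smul_of_mem_of_smul_mem le_sup_right fun _ ↦ mem_of_smul_mem_of_mem_sup hsatB⟩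
end

section
/- The set Â + B = {x + y : x ∈ Â, y ∈ B} is a subring of R. -/
/-!
Only the mixed products of `p ∈ S` and `q ∈ T` need an argument. If `s * q ∈ S` and
`p = p₁ + s * r` with `p₁ ∈ T`, `r ∈ S`, then moving `s` past `r` absorbs the denominator of `q`:
`p * q = p₁ * q + r * (s * q) ∈ T + S`.
-/

section

variable {R : Type*} [Ring R] {S T : Subring R}

theorem toAddSubgroup_sup_eq_of_mul_mem
    (hST : ∀ x ∈ S, ∀ y ∈ T, x * y ∈ S.toAddSubgroup ⊔ T.toAddSubgroup)
    (hTS : ∀ y ∈ T, ∀ x ∈ S, y * x ∈ S.toAddSubgroup ⊔ T.toAddSubgroup) :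
    (S ⊔ T).toAddSubgroup = S.toAddSubgroup ⊔ T.toAddSubgroup := by
  have left_le : S.toAddSubgroup ≤ S.toAddSubgroup ⊔ T.toAddSubgroup := le_sup_left
  have right_le : T.toAddSubgroup ≤ S.toAddSubgroup ⊔ T.toAddSubgroup := le_sup_right
  let sumRing : Subring R :=
    { S.toAddSubgroup ⊔ T.toAddSubgroup with
      one_mem' := left_le S.one_mem
      mul_mem' := by
        intro z w hz hw
        obtain ⟨x, hx, y, hy, rfl⟩ := AddSubgroup.mem_sup.mp hz
        obtain ⟨x', hx', y', hy', rfl⟩ := AddSubgroup.mem_sup.mp hw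
        change (x + y) * (x' + y') ∈ S.toAddSubgroup ⊔ T.toAddSubgroup
        rw [add_mul, mul_add, mul_add]
        exact add_mem (add_mem (left_le (S.mul_mem hx hx')) (hST x hx y' hy'))
          (add_mem (hTS y hy x' hx') (right_le (T.mul_mem hy hy'))) }
  have sup_le_sumRing : S ⊔ T ≤ sumRing := sup_le left_le right_le
  have left_le_sup : S ≤ S ⊔ T := le_sup_left
  have right_le_sup : T ≤ S ⊔ T := le_sup_right
  exact le_antisymm sup_le_sumRing (sup_le left_le_sup right_le_sup)

theorem add_mul_mul_mem_sup {s p r q : R} (hsr : Commute s r) (hp : p ∈ T) (hr : r ∈ S)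
    (hq : q ∈ T) (hsq : s * q ∈ S) :
    (p + s * r) * q ∈ S.toAddSubgroup ⊔ T.toAddSubgroup := by
  refine AddSubgroup.mem_sup.mpr ⟨r * (s * q), S.mul_mem hr hsq, p * q, T.mul_mem hp hq, ?_⟩
  rw [add_mul, hsr.eq, mul_assoc, add_comm]

theorem mul_add_mul_mem_sup {s p r q : R} (hsq_comm : Commute s q) (hp : p ∈ T) (hr : r ∈ S)
    (hq : q ∈ T) (hsq : s * q ∈ S) :
    q * (p + s * r) ∈ S.toAddSubgroup ⊔ T.toAddSubgroup := by
  refine AddSubgroup.mem_sup.mpr ⟨s * q * r, S.mul_mem hsq hr, q * p, T.mul_mem hq hp, ?_⟩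
  rw [mul_add, hsq_comm.eq, mul_assoc, add_comm]

theorem statement12_general {ι : Type*} (s : ι → R)
    (commute_left : ∀ i, ∀ r ∈ S, Commute (s i) r)
    (commute_right : ∀ i, ∀ q ∈ T, Commute (s i) q)
    (exists_mul_mem : ∀ q ∈ T, ∃ i, s i * q ∈ S)
    (exists_eq_add_mul : ∀ p ∈ S, ∀ i, ∃ p₁ ∈ T, ∃ r ∈ S, p = p₁ + s i * r) :
    ((S ⊔ T : Subring R) : Set R) = {z : R | ∃ x ∈ S, ∃ y ∈ T, z = x + y} := by
  have sup_eq : (S ⊔ T).toAddSubgroup = S.toAddSubgroup ⊔ T.toAddSubgroup := by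
    refine toAddSubgroup_sup_eq_of_mul_mem (fun p hp q hq ↦ ?_) (fun q hq p hp ↦ ?_)
    all_goals
      obtain ⟨i, hsq⟩ := exists_mul_mem q hq
      obtain ⟨p₁, hp₁, r, hr, rfl⟩ := exists_eq_add_mul p hp i
    · exact add_mul_mul_mem_sup (commute_left i r hr) hp₁ hr hq hsq
    · exact mul_add_mul_mem_sup (commute_right i q hq) hp₁ hr hq hsq
  ext z
  rw [SetLike.mem_coe, ← Subring.mem_toAddSubgroup, sup_eq, AddSubgroup.mem_sup]
  simp only [Subring.mem_toAddSubgroup, Set.mem_ofPred_eq, eq_comm]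

end

/-- Abstract form of the auxiliary result `E = D̂^{(k,m)} + D^{(k,m+1)}` is a ring, from
Proposition 2.2.7(i) of the paper (and of the analogous claim in Proposition 2.2.11): let
`R` be an associative unital ring, `ϖ` a central element, and `A ⊆ B`, `A ⊆ Â` subrings
of `R` such that (1) every `Q ∈ B` satisfies `ϖ^c·Q ∈ A` for some `c ∈ ℕ`, and (2) every
`P ∈ Â` can be written, for every `c ∈ ℕ`, as `P = P₁ + ϖ^c·R₁` with `P₁ ∈ A`, `R₁ ∈ Â`.
Then the set `Â + B = {x + y : x ∈ Â, y ∈ B}` is a subring of `R`. -/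
theorem statement12 {R : Type*} [Ring R] (ϖ : R) (hϖ : ∀ r : R, ϖ * r = r * ϖ)
    (A B Ahat : Subring R) (hAB : A ≤ B) (hAAhat : A ≤ Ahat)
    (h1 : ∀ Q ∈ B, ∃ c : ℕ, ϖ ^ c * Q ∈ A)
    (h2 : ∀ P ∈ Ahat, ∀ c : ℕ, ∃ P₁ ∈ A, ∃ R₁ ∈ Ahat, P = P₁ + ϖ ^ c * R₁) :
    ∃ S : Subring R, (S : Set R) = {z : R | ∃ x ∈ Ahat, ∃ y ∈ B, z = x + y} :=
  ⟨Ahat ⊔ B, statement12_general (fun c : ℕ ↦ ϖ ^ c)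
    (fun c r _ ↦ Commute.pow_left (hϖ r) c) (fun c q _ ↦ Commute.pow_left (hϖ q) c)
    (fun Q hQ ↦ (h1 Q hQ).imp fun _ hcQ ↦ hAAhat hcQ)
    (fun P hP c ↦ (h2 P hP c).imp fun _ ⟨hP₁, hR₁⟩ ↦ ⟨hAB hP₁, hR₁⟩)⟩
end
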